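/- Let C : Fin u → Set (Fin q) be a k-superimposed binary code, let F₁,…,F_c be set families each given by a tuple of K subsets of Fin u, Fᵢ = (F_{i,1},…,F_{i,K}), and let S = ⋃_{i=1}^{c} C^{⊗K}(Fᵢ) ⊆ (Fin q)^K. Then for every W ⊆ Fin u with |W| ≤ k: W satisfies [cover] (for every i there exists j with F_{i,j} ⊆ W) if and only if S ∩ ((Fin q) \ C(W))^K = ∅, where ((Fin q) \ C(W))^K is the set of tuples all of whose entries avoid C(W). -/

import Mathlib

/-!
Monotonicity of `X ↦ C(X)` gives one direction: a tuple in the encoding of `Fᵢ` has its entry at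
the covering index `j` in `C(F i j) ⊆ C(W)`. Conversely, if no `F i j` lies in `W` for some `i`,
then each `F i j` has an element `y ∉ W`, and since `C` is superimposed and `|W| ≤ k`, the codeword
`C y` has a symbol outside `C(W)`. Choosing one such symbol for each `j` gives a tuple in the
encoding of `Fᵢ` all of whose entries avoid `C(W)`.
-/

/-- The encoding of a set `X` by a binary code `C`: the union of the codewords of
the elements of `X`. -/
def codeUnion {u q : ℕ} (C : Fin u → Set (Fin q)) (X : Set (Fin u)) : Set (Fin q) :=
  ⋃ x ∈ X, C x

/-- For a `k`-superimposed code `C` and families `F₁, …, F_c` of `K`-tuples of subsets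
of `Fin u`, with `S` the union of the tensor encodings `C^{⊗K}(Fᵢ)`, a set `W` of size
at most `k` satisfies [cover] iff `S` does not meet the tuples avoiding `C(W)`. -/
theorem cover_iff_tensor_disjoint {u q : ℕ} (c K k : ℕ)
    (hc : 1 ≤ c) (hK : 1 ≤ K) (hk : 1 ≤ k)
    (C : Fin u → Set (Fin q))
    (hsup : ∀ X : Set (Fin u), X.ncard ≤ k → ∀ y ∉ X, ¬ C y ⊆ codeUnion C X)
    (F : Fin c → Fin K → Set (Fin u))
    (W : Set (Fin u)) (hW : W.ncard ≤ k) :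
    (∀ i, ∃ j, F i j ⊆ W) ↔
      (⋃ i, {g : Fin K → Fin q | ∀ j, g j ∈ codeUnion C (F i j)}) ∩
          {g : Fin K → Fin q | ∀ j, g j ∉ codeUnion C W} = ∅ := by
  constructor
  · intro h
    rw [Set.eq_empty_iff_forall_notMem]
    rintro g ⟨hg, hgW⟩
    obtain ⟨i, hi⟩ := Set.mem_iUnion.mp hg
    obtain ⟨j, hj⟩ := h i
    exact hgW j (Set.biUnion_subset_biUnion_left hj (hi j))
  · intro h
    by_contra! ⟨i, hi⟩
    have symbol : ∀ j, ∃ a, a ∈ codeUnion C (F i j) ∧ a ∉ codeUnion C W := by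
      intro j
      obtain ⟨y, hy, hyW⟩ := Set.not_subset.mp (hi j)
      obtain ⟨a, ha, haW⟩ := Set.not_subset.mp (hsup W hW y hyW)
      exact ⟨a, Set.mem_biUnion hy ha, haW⟩
    choose g hg hgW using symbol
    exact Set.eq_empty_iff_forall_notMem.mp h g ⟨Set.mem_iUnion.mpr ⟨i, hg⟩, hgW⟩
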